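/- Let p be a prime, SNR > 0, f ∈ {0,1,…,p−1} an integer, and ε ∈ ℝ with δ(p,ε) > 0. Let X be a random variable uniformly distributed over the constellation Λ_p, and let Θ be a real random variable statistically independent of X. Define U = ((f + ε)·X + Θ)*. Then 𝔼[exp(−(SNR/8)·U²)] ≤ 1/p + √(2π/(3·δ(p,ε)²·SNR)). -/

import Mathlib

open MeasureTheory ProbabilityTheory Real Filter
open scoped ENNReal

noncomputable section

/-- Reduction of `x` modulo the half-open interval `[a, b)`. -/
def modIco (a b x : ℝ) : ℝ := a + (b - a) * Int.fract ((x - a) / (b - a))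

/-- `L = √12`. -/
def Lc : ℝ := Real.sqrt 12

/-- `x*`: reduction of `x` modulo the basic interval `I = [-L/2, L/2)`. -/
def starI (x : ℝ) : ℝ := modIco (-(Lc / 2)) (Lc / 2) x

/-- `δ(p, γ) = min_{l ∈ {1,…,p−1}} |l·γ − ⌊l·γ⌉|`. -/
def deltaP (p : ℕ) (γ : ℝ) : ℝ :=
  sInf {d : ℝ | ∃ l : ℕ, 1 ≤ l ∧ l ≤ p - 1 ∧ d = |(l : ℝ) * γ - round ((l : ℝ) * γ)|}

/-- The set `P'(γ)` of admissible primes (depends on the SNR). -/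
def Pgood (SNR : ℝ) (γ : ℝ) : Set ℕ :=
  {p | p.Prime ∧
    Real.exp (-(3 * SNR / (2 * (p : ℝ) ^ 2)) * (modIco (-(1/4)) (1/4) γ) ^ 2) <
      1 - 2 * (p : ℝ) * Real.exp (-(3 * SNR / 8))}

/-- First rate expression in the achievable-rate theorem. -/
def rateA (SNR : ℝ) (p : ℕ) (γ : ℝ) : ℝ :=
  -(1/2) * Real.logb 2 (1/(p : ℝ)^2 + Real.sqrt (2 * π / (3 * SNR))
    + (1/(p : ℝ)) * Real.exp (-(3 * SNR / (2 * (p : ℝ)^2)) * (deltaP p γ)^2)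
    + 2 * Real.exp (-(3 * SNR / 8)))

/-- Second rate expression in the achievable-rate theorem. -/
def rateB (SNR : ℝ) (p : ℕ) (γ : ℝ) : ℝ :=
  -Real.logb 2 (1/(p : ℝ) + Real.sqrt (2 * π / (3 * (deltaP p γ)^2 * SNR))
    + 2 * Real.exp (-(3 * SNR / 8)))

/-- The `k`-th point of the constellation `Λ_p`. -/
def constPt (p : ℕ) (k : ℕ) : ℝ := starI (Lc / (p : ℝ) * (k : ℝ))

/-- The constellation `Λ_p` as a finite set of reals. -/
def constSet (p : ℕ) : Finset ℝ := (Finset.range p).image (constPt p)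

/-- The uniform probability measure on the constellation `Λ_p`. -/
def uniformConst (p : ℕ) : Measure ℝ :=
  (p : ℝ≥0∞)⁻¹ • ∑ k ∈ Finset.range p, Measure.dirac (constPt p k)

lemma Lc_pos : 0 < Lc := by unfold Lc; positivity

lemma starI_eq (x : ℝ) : ∃ n : ℤ, starI x = x - Lc * n := by
  have h := Lc_pos.ne'
  refine ⟨⌊(x - -(Lc / 2)) / (Lc / 2 - -(Lc / 2))⌋, ?_⟩
  have h2 : Lc / 2 - -(Lc / 2) = Lc := by ring
  simp only [starI, modIco, Int.fract, h2]
  field_simp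
  ring

lemma starI_mem (x : ℝ) : -(Lc / 2) ≤ starI x ∧ starI x < Lc / 2 := by
  have h := Lc_pos
  have h2 : Lc / 2 - -(Lc / 2) = Lc := by ring
  simp only [starI, modIco, h2]
  have h3 := Int.fract_nonneg ((x - -(Lc / 2)) / Lc)
  have h4 := Int.fract_lt_one ((x - -(Lc / 2)) / Lc)
  constructor <;> nlinarith

lemma measurable_starI : Measurable starI := by
  unfold starI modIco
  fun_prop

lemma deltaP_le (p : ℕ) (ε : ℝ) (m n : ℤ) (hm : m ≠ 0) (hmp : |m| < p) :
    deltaP p ε ≤ |(m : ℝ) * ε - n| := by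
  have key : ∀ l : ℕ, 1 ≤ l → l ≤ p - 1 → ∀ n : ℤ, deltaP p ε ≤ |(l : ℝ) * ε - n| := by
    intro l h1 h2 n
    refine le_trans (csInf_le ⟨0, ?_⟩ ⟨l, h1, h2, rfl⟩) (round_le _ _)
    rintro d ⟨l, -, -, rfl⟩
    positivity
  rcases le_total 0 m with h | h
  · obtain ⟨l, rfl⟩ := Int.eq_ofNat_of_zero_le h
    rw [abs_of_nonneg h] at hmp
    have := key l (by omega) (by omega) n
    simpa using this
  · obtain ⟨l, hl⟩ := Int.eq_ofNat_of_zero_le (neg_nonneg.2 h)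
    rw [abs_of_nonpos h] at hmp
    have := key l (by omega) (by omega) (-n)
    have hm' : (m : ℝ) = -(l : ℝ) := by
      have : m = -(l : ℤ) := by omega
      rw [this]; push_cast; ring
    rw [hm']
    rw [← abs_neg]
    convert this using 2
    push_cast; ring

lemma sep (p : ℕ) (hp : p.Prime) (f : ℕ) (ε θ : ℝ) (j k : ℕ) (hj : j < p) (hk : k < p)
    (hjk : j ≠ k) :
    Lc * deltaP p ε / p ≤ |starI (((f : ℝ) + ε) * constPt p j + θ)
      - starI (((f : ℝ) + ε) * constPt p k + θ)| := by
  have hL := Lc_pos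
  have hp0 : (0 : ℝ) < p := by exact_mod_cast hp.pos
  obtain ⟨a, ha⟩ := starI_eq (Lc / (p : ℝ) * (j : ℝ))
  obtain ⟨b, hb⟩ := starI_eq (Lc / (p : ℝ) * (k : ℝ))
  have ha' := starI_mem (Lc / (p : ℝ) * (j : ℝ))
  have hb' := starI_mem (Lc / (p : ℝ) * (k : ℝ))
  obtain ⟨c, hc⟩ := starI_eq (((f : ℝ) + ε) * constPt p j + θ)
  obtain ⟨e, he⟩ := starI_eq (((f : ℝ) + ε) * constPt p k + θ)
  set m : ℤ := (j : ℤ) - k - p * (a - b) with hm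
  have hdiff : constPt p j - constPt p k = Lc / p * m := by
    unfold constPt
    rw [ha, hb, hm]; push_cast; field_simp; ring
  have hm0 : m ≠ 0 := by
    intro h0
    have hdvd : (p : ℤ) ∣ (j : ℤ) - k := ⟨a - b, by omega⟩
    have := Int.eq_zero_of_abs_lt_dvd hdvd (by rw [abs_lt]; constructor <;> omega)
    omega
  have hmp : |m| < p := by
    have h1 : |Lc / p * (m : ℝ)| < Lc := by
      rw [← hdiff, abs_lt]; unfold constPt
      constructor <;> linarith [ha'.1, ha'.2, hb'.1, hb'.2]
    rw [abs_mul, abs_of_pos (by positivity : 0 < Lc / p), div_mul_eq_mul_div, div_lt_iff₀ hp0] at h1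
    have h2 : |(m : ℝ)| < p := lt_of_mul_lt_mul_left h1 hL.le
    exact_mod_cast h2
  have h := deltaP_le p ε m (p * (c - e) - f * m) hm0 hmp
  have hfin : starI (((f : ℝ) + ε) * constPt p j + θ)
      - starI (((f : ℝ) + ε) * constPt p k + θ)
      = Lc / p * ((m : ℝ) * ε - ((p * (c - e) - f * m : ℤ) : ℝ)) := by
    rw [hc, he]
    have : ((f : ℝ) + ε) * constPt p j + θ - Lc * c - (((f : ℝ) + ε) * constPt p k + θ - Lc * e)
      = ((f : ℝ) + ε) * (constPt p j - constPt p k) - Lc * (c - e) := by ring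
    rw [this, hdiff]; push_cast; field_simp; ring
  rw [hfin, abs_mul, abs_of_pos (by positivity : 0 < Lc / p), mul_div_right_comm]
  gcongr

lemma gauss_int_lower (c : ℝ) (hc : 0 < c) (a b u : ℝ) (hab : a ≤ b)
    (h : ∀ x ∈ Set.Icc a b, |x| ≤ |u|) :
    (b - a) * exp (-c * u ^ 2) ≤ ∫ x in a..b, exp (-c * x ^ 2) := by
  have h1 : ∫ _ in a..b, exp (-c * u ^ 2) = (b - a) * exp (-c * u ^ 2) := by simp
  rw [← h1]
  apply intervalIntegral.integral_mono_on hab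
  · simp
  · apply Continuous.intervalIntegrable; fun_prop
  · intro x hx
    apply exp_le_exp.2
    have := sq_le_sq.2 (h x hx)
    nlinarith

lemma gauss_sum (c d : ℝ) (hc : 0 < c) (hd : 0 < d) (S : Finset ℝ) :
    (∀ x ∈ S, ∀ y ∈ S, x ≠ y → d ≤ |x - y|) → ∀ A B : ℝ, A ≤ B →
    (∀ x ∈ S, A ≤ x ∧ x ≤ B) →
    d * ∑ x ∈ S, exp (-c * x ^ 2) ≤ d + ∫ x in A..B, exp (-c * x ^ 2) := by
  have hint : ∀ a b : ℝ, IntervalIntegrable (fun x => exp (-c * x ^ 2)) volume a b := by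
    intro a b; apply Continuous.intervalIntegrable; fun_prop
  have hnn : ∀ a b : ℝ, a ≤ b → 0 ≤ ∫ x in a..b, exp (-c * x ^ 2) := by
    intro a b hab
    exact intervalIntegral.integral_nonneg hab (fun x _ => (exp_pos _).le)
  induction S using Finset.induction_on_max_value (fun x : ℝ => |x|) with
  | empty =>
    intro _ A B hAB _
    have := hnn A B hAB
    rw [Finset.sum_empty]; linarith
  | insert u S hu hmax ih =>
    intro hsep A B hAB hmem
    rw [Finset.sum_insert hu]
    have hsepS : ∀ x ∈ S, ∀ y ∈ S, x ≠ y → d ≤ |x - y| := fun x hx y hy =>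
      hsep x (Finset.mem_insert_of_mem hx) y (Finset.mem_insert_of_mem hy)
    have hu' := hmem u (Finset.mem_insert_self _ _)
    rcases S.eq_empty_or_nonempty with rfl | ⟨y, hy⟩
    · have := hnn A B hAB
      have h1 : exp (-c * u ^ 2) ≤ 1 := exp_le_one_iff.2 (by nlinarith [sq_nonneg u])
      simp only [Finset.sum_empty]
      nlinarith
    · have hs : ∀ x ∈ S, d ≤ |u - x| := fun x hx =>
        hsep u (Finset.mem_insert_self _ _) x (Finset.mem_insert_of_mem hx)
          (fun h => hu (h ▸ hx))
      have hm : ∀ x ∈ S, A ≤ x ∧ x ≤ B := fun x hx => hmem x (Finset.mem_insert_of_mem hx)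
      rcases le_total 0 u with h0 | h0
      · have hx : ∀ x ∈ S, -u ≤ x ∧ x ≤ u - d := by
          intro x hx
          have h1 := hmax x hx
          rw [abs_of_nonneg h0, abs_le] at h1
          have h2 := hs x hx
          rw [abs_of_nonneg (by linarith)] at h2
          exact ⟨h1.1, by linarith⟩
        have hA : A ≤ u - d := (hm y hy).1.trans (hx y hy).2
        have hI := ih hsepS A (u - d) hA (fun x hx' => ⟨(hm x hx').1, (hx x hx').2⟩)
        have hl := gauss_int_lower c hc (u - d) u u (by linarith) (by
          rintro x ⟨h1, h2⟩
          rw [abs_of_nonneg h0, abs_le]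
          exact ⟨by linarith [(hx y hy).1, (hx y hy).2], h2⟩)
        have e1 := intervalIntegral.integral_add_adjacent_intervals (hint A (u - d)) (hint (u - d) u)
        have e2 := intervalIntegral.integral_add_adjacent_intervals (hint A u) (hint u B)
        have := hnn u B hu'.2
        rw [sub_sub_cancel] at hl
        linarith
      · have hx : ∀ x ∈ S, u + d ≤ x ∧ x ≤ -u := by
          intro x hx
          have h1 := hmax x hx
          rw [abs_of_nonpos h0, abs_le] at h1
          have h2 := hs x hx
          rw [abs_of_nonpos (by linarith)] at h2
          exact ⟨by linarith, h1.2⟩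
        have hB : u + d ≤ B := (hx y hy).1.trans (hm y hy).2
        have hI := ih hsepS (u + d) B hB (fun x hx' => ⟨(hx x hx').1, (hm x hx').2⟩)
        have hl := gauss_int_lower c hc u (u + d) u (by linarith) (by
          rintro x ⟨h1, h2⟩
          rw [abs_of_nonpos h0, abs_le]
          exact ⟨by linarith, by linarith [(hx y hy).1, (hx y hy).2]⟩)
        have e1 := intervalIntegral.integral_add_adjacent_intervals (hint u (u + d)) (hint (u + d) B)
        have e2 := intervalIntegral.integral_add_adjacent_intervals (hint A u) (hint u B)
        have := hnn A u hu'.1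
        rw [add_sub_cancel_left] at hl
        linarith

lemma gauss_sum' (c d : ℝ) (hc : 0 < c) (hd : 0 < d) (S : Finset ℝ)
    (hS : ∀ x ∈ S, ∀ y ∈ S, x ≠ y → d ≤ |x - y|) (B : ℝ) (hB : 0 ≤ B)
    (h : ∀ x ∈ S, -B ≤ x ∧ x ≤ B) :
    d * ∑ x ∈ S, exp (-c * x ^ 2) ≤ d + sqrt (π / c) := by
  refine (gauss_sum c d hc hd S hS (-B) B (by linarith) h).trans ?_
  rw [← integral_gaussian c, intervalIntegral.integral_of_le (by linarith)]
  refine add_le_add le_rfl ?_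
  exact setIntegral_le_integral (integrable_exp_neg_mul_sq hc)
    (Eventually.of_forall fun x => (exp_pos _).le)

lemma inner_bound (p : ℕ) (hp : p.Prime) (SNR : ℝ) (hSNR : 0 < SNR) (f : ℕ) (ε θ : ℝ)
    (hδ : 0 < deltaP p ε) :
    ∫ x, exp (-(SNR / 8) * (starI (((f : ℝ) + ε) * x + θ)) ^ 2) ∂(uniformConst p)
      ≤ 1 / (p : ℝ) + Real.sqrt (2 * π / (3 * (deltaP p ε) ^ 2 * SNR)) := by
  have hL := Lc_pos
  have hp0 : (0 : ℝ) < p := by exact_mod_cast hp.pos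
  have hd : 0 < Lc * deltaP p ε / p := by positivity
  unfold uniformConst
  rw [integral_smul_measure, integral_finsetSum_measure (fun i _ => integrable_dirac (by simp [enorm]))]
  simp only [integral_dirac]
  set U : ℕ → ℝ := fun k => starI (((f : ℝ) + ε) * constPt p k + θ) with hU
  have hinj : Set.InjOn U (Finset.range p : Set ℕ) := by
    intro j hj k hk hjk
    by_contra hne
    have := sep p hp f ε θ j k (by simpa using hj) (by simpa using hk) hne
    have h0 : U j - U k = 0 := sub_eq_zero.2 hjk
    simp only [hU] at h0
    rw [h0, abs_zero] at this
    linarith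
  have hsum := gauss_sum' (SNR / 8) _ (by positivity) hd ((Finset.range p).image U) (by
    simp only [Finset.mem_image, Finset.mem_range]
    rintro _ ⟨j, hj, rfl⟩ _ ⟨k, hk, rfl⟩ hne
    exact sep p hp f ε θ j k hj hk (fun h => hne (by rw [h]))) (Lc / 2) (by positivity) (by
    simp only [Finset.mem_image, Finset.mem_range]
    rintro _ ⟨j, hj, rfl⟩
    exact ⟨(starI_mem _).1, (starI_mem _).2.le⟩)
  rw [Finset.sum_image hinj] at hsum
  have hsq : sqrt (π / (SNR / 8)) = Lc * deltaP p ε * Real.sqrt (2 * π / (3 * (deltaP p ε) ^ 2 * SNR)) := by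
    rw [Real.sqrt_eq_iff_mul_self_eq (by positivity) (by positivity)]
    have h1 := Real.mul_self_sqrt (by positivity : 0 ≤ 2 * π / (3 * (deltaP p ε) ^ 2 * SNR))
    have h2 : Lc * Lc = 12 := by unfold Lc; exact Real.mul_self_sqrt (by norm_num)
    symm
    calc _ = (Lc * Lc) * (deltaP p ε)^2 * (√(2 * π / (3 * (deltaP p ε) ^ 2 * SNR)) * √(2 * π / (3 * (deltaP p ε) ^ 2 * SNR))) := by ring
      _ = _ := by rw [h1, h2]; field_simp; norm_num
  rw [hsq] at hsum
  have h3 : ((p : ℝ≥0∞)⁻¹).toReal = 1 / (p : ℝ) := by simp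
  rw [h3, smul_eq_mul]
  set s := ∑ x ∈ Finset.range p, exp (-(SNR / 8) * U x ^ 2)
  have h4 : Lc * deltaP p ε * (1 / p * s) ≤ Lc * deltaP p ε * (1 / p + √(2 * π / (3 * (deltaP p ε) ^ 2 * SNR))) := by
    calc _ = Lc * deltaP p ε / p * s := by ring
      _ ≤ _ := hsum
      _ = _ := by ring
  exact le_of_mul_le_mul_left h4 (by positivity)

/-- **Lemma 4.** For `X` uniform on `Λ_p`, `Θ` independent of `X`, `f ∈ {0,…,p−1}` and
`ε ∈ ℝ`, with `U = ((f+ε)·X + Θ)*`, one has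
`𝔼[exp(−(SNR/8)·U²)] ≤ 1/p + √(2π/(3·δ(p,ε)²·SNR))`. -/
theorem lemma_expectation_scaled
    (p : ℕ) (hp : p.Prime) (SNR : ℝ) (hSNR : 0 < SNR)
    (f : ℕ) (hf : f ≤ p - 1) (ε : ℝ) (hδ : 0 < deltaP p ε)
    (Ω : Type) (_ : MeasurableSpace Ω) (μ : Measure Ω) [IsProbabilityMeasure μ]
    (X Θ : Ω → ℝ) (hX : Measurable X) (hΘ : Measurable Θ)
    (hXunif : Measure.map X μ = uniformConst p)
    (hindep : IndepFun X Θ μ) :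
    ∫ ω, Real.exp (-(SNR / 8) * (starI (((f : ℝ) + ε) * X ω + Θ ω)) ^ 2) ∂μ
      ≤ 1 / (p : ℝ) + Real.sqrt (2 * π / (3 * (deltaP p ε) ^ 2 * SNR)) := by
  have := Measure.isProbabilityMeasure_map hX.aemeasurable (μ := μ)
  have := Measure.isProbabilityMeasure_map hΘ.aemeasurable (μ := μ)
  set F : ℝ × ℝ → ℝ := fun z => Real.exp (-(SNR / 8) * (starI (((f : ℝ) + ε) * z.1 + z.2)) ^ 2) with hF
  have hFm : Measurable F := by
    have := measurable_starI
    fun_prop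
  have h1 : ∫ ω, Real.exp (-(SNR / 8) * (starI (((f : ℝ) + ε) * X ω + Θ ω)) ^ 2) ∂μ
      = ∫ z, F z ∂(μ.map (fun ω => (X ω, Θ ω))) := by
    rw [integral_map (hX.prodMk hΘ).aemeasurable hFm.aestronglyMeasurable]
  rw [h1, (indepFun_iff_map_prod_eq_prod_map_map hX.aemeasurable hΘ.aemeasurable).1 hindep]
  have hint : Integrable F ((μ.map X).prod (μ.map Θ)) := by
    refine Integrable.of_bound hFm.aestronglyMeasurable 1 (Eventually.of_forall fun z => ?_)
    rw [Real.norm_eq_abs, abs_of_pos (exp_pos _)]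
    exact exp_le_one_iff.2 (by nlinarith [sq_nonneg (starI (((f : ℝ) + ε) * z.1 + z.2))])
  rw [integral_prod_symm _ hint]
  calc _ ≤ ∫ _, (1 / (p : ℝ) + Real.sqrt (2 * π / (3 * (deltaP p ε) ^ 2 * SNR))) ∂(μ.map Θ) := by
        refine integral_mono hint.integral_prod_right (integrable_const _) fun θ => ?_
        rw [hXunif]
        exact inner_bound p hp SNR hSNR f ε θ hδ
    _ = _ := by simp
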